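/- arXiv:2211.04554 — 2 statements merged into one kernel-verified Lean document; each statement's English description precedes it below -/
import Mathlib

section
/- Let Γ be a countable discrete group, μ a probability measure on Γ, X a compact metrizable space with a continuous Γ-action, and ν a μ-stationary Borel probability measure on X. Then for μ^{⊗ℕ}-almost every sequence γ = (g_1, g_2, …) ∈ Γ^ℕ (with respect to the infinite product measure μ^{⊗ℕ}), the sequence of pushforward measures (g_1 g_2 ⋯ g_n)_* ν converges, as n → ∞, in the weak-* topology on Borel probability measures on X to a limit ν_γ, and the almost-everywhere defined map γ ↦ ν_γ from Γ^ℕ to the space of Borel probability measures on X is measurable. -/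
open MeasureTheory Filter Topology

/-- Weak-* convergence of a sequence can be tested on a dense sequence of functions. -/
theorem exists_tendsto_of_dense
    {X : Type*} [TopologicalSpace X] [CompactSpace X] [TopologicalSpace.MetrizableSpace X]
    [MeasurableSpace X] [BorelSpace X] (ρ : ℕ → ProbabilityMeasure X)
    (d : ℕ → C(X, ℝ)) (hd : DenseRange d)
    (h : ∀ k, ∃ c, Tendsto (fun n => ∫ x, d k x ∂(ρ n : Measure X)) atTop (𝓝 c)) :
    ∃ l, Tendsto ρ atTop (𝓝 l) := by
  obtain ⟨l, φ, hφ, hl⟩ := CompactSpace.tendsto_subseq ρ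
  refine ⟨l, ?_⟩
  have hD : ∀ k, Tendsto (fun n => ∫ x, d k x ∂(ρ n : Measure X)) atTop
      (𝓝 (∫ x, d k x ∂(l : Measure X))) := by
    intro k
    obtain ⟨c, hc⟩ := h k
    have h1 := (ProbabilityMeasure.tendsto_iff_forall_integral_tendsto.1 hl)
      (BoundedContinuousFunction.mkOfCompact (d k))
    have h2 := hc.comp hφ.tendsto_atTop
    have : c = ∫ x, d k x ∂(l : Measure X) := tendsto_nhds_unique h2 h1
    rwa [← this]
  have hint : ∀ (f : C(X, ℝ)) (m : ProbabilityMeasure X), Integrable f (m : Measure X) := by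
    intro f m
    exact (BoundedContinuousFunction.mkOfCompact f).integrable _
  have hclose : ∀ (f g : C(X, ℝ)) (m : ProbabilityMeasure X),
      dist (∫ x, f x ∂(m : Measure X)) (∫ x, g x ∂(m : Measure X)) ≤ dist f g := by
    intro f g m
    rw [dist_eq_norm, ← integral_sub (hint f m) (hint g m)]
    refine (norm_integral_le_of_norm_le_const (C := dist f g)
      (Eventually.of_forall fun x => ?_)).trans ?_
    · rw [← dist_eq_norm]; exact ContinuousMap.dist_apply_le_dist x
    · simp
  rw [ProbabilityMeasure.tendsto_iff_forall_integral_tendsto]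
  intro f
  rw [Metric.tendsto_atTop]
  intro ε hε
  let F : C(X, ℝ) := f.toContinuousMap
  obtain ⟨k, hk⟩ := hd.exists_dist_lt F (ε := ε / 3) (by positivity)
  obtain ⟨N, hN⟩ := Metric.tendsto_atTop.1 (hD k) (ε / 3) (by positivity)
  refine ⟨N, fun n hn => ?_⟩
  have a1 := hclose F (d k) (ρ n)
  have a2 := hclose F (d k) l
  have a3 := hN n hn
  have a4 := dist_triangle4 (∫ x, F x ∂(ρ n : Measure X)) (∫ x, d k x ∂(ρ n : Measure X))
    (∫ x, d k x ∂(l : Measure X)) (∫ x, F x ∂(l : Measure X))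
  rw [dist_comm (∫ x, d k x ∂(l : Measure X)) (∫ x, F x ∂(l : Measure X))] at a4
  change dist (∫ x, F x ∂(ρ n : Measure X)) (∫ x, F x ∂(l : Measure X)) < ε
  linarith

/-- Restriction to the first `n` coordinates. -/
def initSeg {Γ : Type*} (n : ℕ) (γ : ℕ → Γ) : Fin n → Γ := fun i => γ i

/-- Product of the first `n` coordinates. -/
def walk {Γ : Type*} [Group Γ] (n : ℕ) (γ : ℕ → Γ) : Γ := ((List.range n).map γ).prod

theorem walk_succ {Γ : Type*} [Group Γ] (n : ℕ) (γ : ℕ → Γ) :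
    walk (n + 1) γ = walk n γ * γ n := by
  simp [walk, List.range_succ]

theorem walk_eq_ofFn {Γ : Type*} [Group Γ] (n : ℕ) (γ : ℕ → Γ) :
    walk n γ = (List.ofFn (initSeg n γ)).prod := by
  unfold walk initSeg
  congr 1
  apply List.ext_getElem <;> simp

theorem measurable_initSeg {Γ : Type*} [MeasurableSpace Γ] (n : ℕ) :
    Measurable (initSeg (Γ := Γ) n) :=
  measurable_pi_lambda _ fun i => measurable_pi_apply _

/-- The filtration generated by the coordinates. -/
def coordFilt (Γ : Type*) [MeasurableSpace Γ] :
    Filtration ℕ (MeasurableSpace.pi : MeasurableSpace (ℕ → Γ)) where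
  seq n := MeasurableSpace.comap (initSeg n) MeasurableSpace.pi
  mono' := by
    intro m n hmn
    have : initSeg (Γ := Γ) m = (fun w i => w (Fin.castLE hmn i)) ∘ initSeg n := by
      ext γ i; simp [initSeg]
    change MeasurableSpace.comap (initSeg m) MeasurableSpace.pi
      ≤ MeasurableSpace.comap (initSeg n) MeasurableSpace.pi
    rw [this, ← MeasurableSpace.comap_comp]
    apply MeasurableSpace.comap_mono
    exact (measurable_pi_lambda _ fun i => measurable_pi_apply _ : Measurable
      (fun (w : Fin n → Γ) (i : Fin m) => w (Fin.castLE hmn i))).comap_le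
  le' n := (measurable_initSeg n).comap_le

theorem integral_cylinder
    {Γ : Type*} [Group Γ] [Countable Γ] [MeasurableSpace Γ] [MeasurableSingletonClass Γ]
    (μ : Measure Γ) [IsProbabilityMeasure μ]
    (P : Measure (ℕ → Γ)) [IsProbabilityMeasure P]
    (hP : ∀ (n : ℕ) (g : Fin n → Γ),
      P {γ : ℕ → Γ | ∀ i : Fin n, γ (i : ℕ) = g i} = ∏ i : Fin n, μ {g i})
    (n : ℕ) (w : Fin n → Γ) (φ : Γ → ℝ) :
    ∫ γ in initSeg n ⁻¹' {w}, φ (γ n) ∂P = (∏ i, μ {w i}).toReal * ∫ g, φ g ∂μ := by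
  have hset : ∀ (n : ℕ) (w : Fin n → Γ),
      initSeg n ⁻¹' {w} = {γ : ℕ → Γ | ∀ i : Fin n, γ (i : ℕ) = w i} := by
    intro n w; ext γ; simp [initSeg, funext_iff]
  have hmap : (P.restrict (initSeg n ⁻¹' {w})).map (fun γ => γ n) = (∏ i, μ {w i}) • μ := by
    refine Measure.ext_of_singleton fun g => ?_
    rw [Measure.map_apply (measurable_pi_apply n) (measurableSet_singleton g),
      Measure.restrict_apply (measurable_pi_apply n (measurableSet_singleton g))]
    have : ((fun γ : ℕ → Γ => γ n) ⁻¹' {g} ∩ initSeg n ⁻¹' {w})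
        = {γ : ℕ → Γ | ∀ i : Fin (n + 1), γ (i : ℕ) = (Fin.snoc w g : Fin (n + 1) → Γ) i} := by
      ext γ
      simp [initSeg, funext_iff, Fin.forall_fin_succ', and_comm]
    rw [this, hP, Fin.prod_univ_castSucc]
    simp
  have hφ : Measurable φ := measurable_of_countable _
  have hmi := integral_map (μ := P.restrict (initSeg n ⁻¹' {w})) (φ := fun γ : ℕ → Γ => γ n)
    (f := φ) (measurable_pi_apply n).aemeasurable hφ.aestronglyMeasurable
  rw [← hmi, hmap, integral_smul_measure]
  simp

theorem martingale_walk
    {Γ : Type*} [Group Γ] [Countable Γ] [MeasurableSpace Γ] [MeasurableSingletonClass Γ]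
    (μ : Measure Γ) [IsProbabilityMeasure μ]
    (P : Measure (ℕ → Γ)) [IsProbabilityMeasure P]
    (hP : ∀ (n : ℕ) (g : Fin n → Γ),
      P {γ : ℕ → Γ | ∀ i : Fin n, γ (i : ℕ) = g i} = ∏ i : Fin n, μ {g i})
    (m : Γ → ℝ) (C : ℝ) (hC : ∀ g, ‖m g‖ ≤ C)
    (hm : ∀ h, ∫ g, m (h * g) ∂μ = m h) :
    ∀ᵐ γ ∂P, ∃ c, Tendsto (fun n => m (walk n γ)) atTop (𝓝 c) := by
  have hmeas' : ∀ n, Measurable[coordFilt Γ n] (fun γ : ℕ → Γ => m (walk n γ)) := by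
    intro n
    have : (fun γ : ℕ → Γ => m (walk n γ)) = (fun w => m (List.ofFn w).prod) ∘ initSeg n := by
      ext γ; simp [walk_eq_ofFn]
    rw [this]
    exact (measurable_of_countable _).comp (comap_measurable _)
  have hmeas : ∀ n, Measurable (fun γ : ℕ → Γ => m (walk n γ)) := fun n =>
    (hmeas' n).mono ((coordFilt Γ).le n) le_rfl
  have hint : ∀ n, Integrable (fun γ : ℕ → Γ => m (walk n γ)) P := fun n =>
    Integrable.of_bound (hmeas n).aestronglyMeasurable C (Eventually.of_forall fun γ => hC _)
  have hmart : Martingale (fun n (γ : ℕ → Γ) => m (walk n γ)) (coordFilt Γ) P := by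
    refine martingale_of_setIntegral_eq_succ (fun n => (hmeas' n).stronglyMeasurable) hint ?_
    rintro n s ⟨T, -, rfl⟩
    have hU : initSeg n ⁻¹' T = ⋃ w : T, initSeg (Γ := Γ) n ⁻¹' {(w : Fin n → Γ)} := by
      ext γ; simp
    have hms : ∀ w : T, MeasurableSet (initSeg (Γ := Γ) n ⁻¹' {(w : Fin n → Γ)}) := fun w =>
      measurable_initSeg n (measurableSet_singleton _)
    have hdis : Pairwise (Function.onFun Disjoint
        (fun w : T => initSeg (Γ := Γ) n ⁻¹' {(w : Fin n → Γ)})) := by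
      intro a b hab
      refine Disjoint.preimage _ ?_
      simpa using fun h => hab (Subtype.ext h)
    rw [hU, integral_iUnion hms hdis (hint _).integrableOn,
      integral_iUnion hms hdis (hint _).integrableOn]
    refine tsum_congr fun w => ?_
    have e1 : ∫ γ in initSeg n ⁻¹' {(w : Fin n → Γ)}, m (walk n γ) ∂P
        = ∫ γ in initSeg n ⁻¹' {(w : Fin n → Γ)}, (fun _ => m (List.ofFn w.1).prod) (γ n) ∂P :=
      setIntegral_congr_fun (hms w) fun γ hγ => by
        have : initSeg n γ = w.1 := hγ
        simp only [walk_eq_ofFn, this]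
    have e2 : ∫ γ in initSeg n ⁻¹' {(w : Fin n → Γ)}, m (walk (n + 1) γ) ∂P
        = ∫ γ in initSeg n ⁻¹' {(w : Fin n → Γ)},
          (fun g => m ((List.ofFn w.1).prod * g)) (γ n) ∂P :=
      setIntegral_congr_fun (hms w) fun γ hγ => by
        have : initSeg n γ = w.1 := hγ
        simp only [walk_succ, walk_eq_ofFn n, this]
    rw [e1, e2, integral_cylinder μ P hP n w.1 (fun _ => m (List.ofFn w.1).prod),
      integral_cylinder μ P hP n w.1 (fun g => m ((List.ofFn w.1).prod * g)), hm]
    simp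
  refine hmart.submartingale.exists_ae_tendsto_of_bdd (R := C.toNNReal) fun n => ?_
  refine (eLpNorm_le_of_ae_bound (Eventually.of_forall fun γ => hC _)).trans ?_
  simp [ENNReal.ofReal]

theorem stationary_mean
    {Γ : Type*} [Group Γ] [Countable Γ] [MeasurableSpace Γ] [MeasurableSingletonClass Γ]
    (μ : Measure Γ) [IsProbabilityMeasure μ]
    {X : Type*} [TopologicalSpace X] [CompactSpace X] [TopologicalSpace.MetrizableSpace X]
    [MeasurableSpace X] [BorelSpace X]
    [MulAction Γ X] (hcont : ∀ g : Γ, Continuous (fun x : X => g • x))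
    (ν : ProbabilityMeasure X)
    (hstat : Measure.sum (fun g : Γ => μ {g} • (ν : Measure X).map (fun x => g • x))
      = (ν : Measure X))
    (f : C(X, ℝ)) (h : Γ) :
    ∫ g, (∫ x, f ((h * g) • x) ∂(ν : Measure X)) ∂μ = ∫ x, f (h • x) ∂(ν : Measure X) := by
  have hfc : ∀ g : Γ, Continuous fun x : X => f (g • x) := fun g => f.continuous.comp (hcont g)
  have hb : ∀ x, ‖f x‖ ≤ ‖f‖ := f.norm_coe_le_norm
  have hi : Integrable (fun x => f (h • x)) (ν : Measure X) :=
    Integrable.of_bound (hfc h).measurable.aestronglyMeasurable ‖f‖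
      (Eventually.of_forall fun x => hb _)
  have hi2 : Integrable (fun g => ∫ x, f ((h * g) • x) ∂(ν : Measure X)) μ := by
    refine Integrable.of_bound (measurable_of_countable _).aestronglyMeasurable ‖f‖
      (Eventually.of_forall fun g => ?_)
    refine (norm_integral_le_of_norm_le_const (Eventually.of_forall fun x => hb _)).trans ?_
    simp
  conv_rhs => rw [← hstat]
  rw [integral_sum_measure (by rwa [hstat]), integral_countable hi2]
  refine tsum_congr fun g => ?_
  rw [integral_smul_measure, integral_map (hcont g).measurable.aemeasurable
    (hfc h).measurable.aestronglyMeasurable]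
  simp [mul_smul, Measure.real]


/-- **Furstenberg's lemma.** Let `Γ` be a countable discrete group, `μ` a probability
measure on `Γ`, `X` a compact metrizable space with a continuous `Γ`-action, and `ν` a
`μ`-stationary Borel probability measure on `X`.  Then for `μ^⊗ℕ`-almost every sequence
`γ = (g₁, g₂, …) ∈ Γ^ℕ` (`P` below denotes the infinite product measure `μ^⊗ℕ`,
characterized by its values on cylinder sets), the pushforward measures
`(g₁ g₂ ⋯ gₙ)_* ν` converge in the weak-* topology to a limit `ν_γ = L γ`, and the map
`γ ↦ ν_γ` is (Borel) measurable. -/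
theorem furstenberg_boundary_limit_measures
    {Γ : Type*} [Group Γ] [Countable Γ] [MeasurableSpace Γ] [MeasurableSingletonClass Γ]
    (μ : Measure Γ) [IsProbabilityMeasure μ]
    {X : Type*} [TopologicalSpace X] [CompactSpace X] [TopologicalSpace.MetrizableSpace X]
    [MeasurableSpace X] [BorelSpace X]
    [MulAction Γ X] (hcont : ∀ g : Γ, Continuous (fun x : X => g • x))
    (ν : ProbabilityMeasure X)
    (hstat : Measure.sum (fun g : Γ => μ {g} • (ν : Measure X).map (fun x => g • x))
      = (ν : Measure X))
    -- `P` is the infinite product measure `μ^{⊗ℕ}` on `Γ^ℕ`, characterized by its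
    -- values on cylinder sets:
    (P : Measure (ℕ → Γ)) [IsProbabilityMeasure P]
    (hP : ∀ (n : ℕ) (g : Fin n → Γ),
      P {γ : ℕ → Γ | ∀ i : Fin n, γ (i : ℕ) = g i} = ∏ i : Fin n, μ {g i}) :
    ∃ L : (ℕ → Γ) → ProbabilityMeasure X,
      (Measurable[_, borel (ProbabilityMeasure X)] L) ∧
      ∀ᵐ γ ∂P,
        Tendsto
          (fun n : ℕ =>
            ν.map (f := fun x : X => ((List.range n).map γ).prod • x)
              ((hcont _).measurable.aemeasurable))
          atTop (𝓝 (L γ)) := by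
  have hmain : ∀ᵐ γ ∂P, ∃ l, Tendsto
      (fun n : ℕ => ν.map (f := fun x : X => walk n γ • x)
        ((hcont _).measurable.aemeasurable)) atTop (𝓝 l) := by
    have hfb : ∀ f : C(X, ℝ), ∀ᵐ γ ∂P, ∃ c, Tendsto
        (fun n => ∫ x, f (walk n γ • x) ∂(ν : Measure X)) atTop (𝓝 c) := by
      intro f
      refine martingale_walk μ P hP (fun g => ∫ x, f (g • x) ∂(ν : Measure X)) ‖f‖
        (fun g => ?_) (stationary_mean μ hcont ν hstat f)
      refine (norm_integral_le_of_norm_le_const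
        (Eventually.of_forall fun x => f.norm_coe_le_norm _)).trans ?_
      simp
    filter_upwards [ae_all_iff.2 fun k => hfb (TopologicalSpace.denseSeq C(X, ℝ) k)] with γ hγ
    refine exists_tendsto_of_dense _ _ (TopologicalSpace.denseRange_denseSeq C(X, ℝ)) fun k => ?_
    obtain ⟨c, hc⟩ := hγ k
    refine ⟨c, hc.congr fun n => ?_⟩
    exact (integral_map (hcont _).measurable.aemeasurable
      (ContinuousMap.continuous _).measurable.aestronglyMeasurable).symm
  have hmeas : ∀ n : ℕ, Measurable[_, borel (ProbabilityMeasure X)] (fun γ : ℕ → Γ =>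
      ν.map (f := fun x : X => walk n γ • x) ((hcont _).measurable.aemeasurable)) := by
    intro n
    have : (fun γ : ℕ → Γ =>
        ν.map (f := fun x : X => walk n γ • x) ((hcont _).measurable.aemeasurable))
        = (fun w : Fin n → Γ => ν.map (f := fun x : X => (List.ofFn w).prod • x)
          ((hcont _).measurable.aemeasurable)) ∘ initSeg n := by
      ext1 γ; simp only [Function.comp, walk_eq_ofFn]
    rw [this]
    intro s _
    rw [Set.preimage_comp]
    exact measurable_initSeg n (Set.to_countable _).measurableSet
  have hborel : @BorelSpace (ProbabilityMeasure X) _ (borel _) :=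
    @BorelSpace.mk (ProbabilityMeasure X) _ (borel _) rfl
  exact @measurable_limit_of_tendsto_metrizable_ae (ℕ → Γ) (ProbabilityMeasure X) _ _ _
    (borel _) hborel ℕ _ P _ atTop _
    (fun n => @Measurable.aemeasurable _ _ _ (borel _) _ P (hmeas n)) hmain
end

section
/- Let d ≥ 2, let F_d be the free group of rank d, and let μ be the uniform probability measure on a symmetric free generating set {a_1^{±1}, …, a_d^{±1}}. Then there is a sequence (N_i)_{i∈ℕ} of pairwise distinct nontrivial normal subgroups of F_d such that, writing μ_i for the pushforward of μ to the quotient F_d/N_i, for every ε > 0 there exists i with h_RW(μ) > h_RW(μ_i) > ((d−2)/(2d−2)) · h_RW(μ) − ε, where h_RW denotes the Avez entropy (and h_RW(μ) = ((d−1)/d) log(2d−1)). -/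
open MeasureTheory Filter Topology

/-- Convolution powers of a probability measure on a discrete group:
`convPow μ 0 = δ_e` and `convPow μ (n+1) {g} = ∑_h μ {h} * convPow μ n {h⁻¹ g}`. -/
noncomputable def convPow {Γ : Type*} [Group Γ] [MeasurableSpace Γ]
    (μ : Measure Γ) : ℕ → Measure Γ
  | 0 => Measure.dirac 1
  | n + 1 => (μ.prod (convPow μ n)).map (fun p => p.1 * p.2)

/-- The Shannon entropy `H(ν) = ∑_g −ν({g}) log ν({g})` of a (finitely supported)
measure on a countable discrete space. -/
noncomputable def shannonEntropy {Γ : Type*} [MeasurableSpace Γ] (ν : Measure Γ) : ℝ :=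
  ∑' g : Γ, -((ν {g}).toReal * Real.log (ν {g}).toReal)

/-- The Shannon entropy of the `n`-th convolution power of the pushforward of `μ` to the
quotient group `G ⧸ N` (with the discrete σ-algebra on the quotient). -/
noncomputable def quotientWalkEntropy {G : Type*} [Group G] [MeasurableSpace G]
    (μ : Measure G) (N : Subgroup G) (hN : N.Normal) (n : ℕ) : ℝ :=
  letI := hN
  letI : MeasurableSpace (G ⧸ N) := ⊤
  shannonEntropy (convPow (μ.map (QuotientGroup.mk : G → G ⧸ N)) n)

section Walk
variable {Γ : Type*} [Group Γ] {ι : Type*} [Fintype ι]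

/-- Expectation of `f` at time `n` for the walk with uniform steps `s i`. -/
noncomputable def wE (s : ι → Γ) : ℕ → (Γ → ℝ) → ℝ
  | 0, f => f 1
  | n + 1, f => (Fintype.card ι : ℝ)⁻¹ * ∑ i, wE s n (fun g => f (s i * g))

open Classical in
/-- Finite support at time `n`. -/
noncomputable def wS (s : ι → Γ) : ℕ → Finset Γ
  | 0 => {1}
  | n + 1 => Finset.univ.biUnion (fun i => (wS s n).image (fun g => s i * g))

open Classical in
/-- Transition probabilities. -/
noncomputable def wP (s : ι → Γ) (n : ℕ) (g : Γ) : ℝ := wE s n (fun x => if x = g then 1 else 0)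

/-- Entropy. -/
noncomputable def wH (s : ι → Γ) (n : ℕ) : ℝ := wE s n (fun g => -Real.log (wP s n g))

lemma mem_wS_succ (s : ι → Γ) {n : ℕ} {g : Γ} (i : ι) (h : g ∈ wS s n) : s i * g ∈ wS s (n+1) := by
  classical
  simp only [wS, Finset.mem_biUnion, Finset.mem_image, Finset.mem_univ, true_and]
  exact ⟨i, g, h, rfl⟩

lemma wE_mono (s : ι → Γ) (n : ℕ) : ∀ f f' : Γ → ℝ, (∀ g ∈ wS s n, f g ≤ f' g) →
    wE s n f ≤ wE s n f' := by
  induction n with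
  | zero => intro f f' h; exact h 1 (by simp [wS])
  | succ n ih =>
    intro f f' h
    simp only [wE]
    gcongr with i
    exact ih _ _ fun g hg => h _ (mem_wS_succ s i hg)

lemma wE_congr (s : ι → Γ) (n : ℕ) (f f' : Γ → ℝ) (h : ∀ g ∈ wS s n, f g = f' g) :
    wE s n f = wE s n f' :=
  le_antisymm (wE_mono s n _ _ fun g hg => (h g hg).le) (wE_mono s n _ _ fun g hg => (h g hg).ge)

lemma wE_add (s : ι → Γ) (n : ℕ) : ∀ f f' : Γ → ℝ,
    wE s n (fun g => f g + f' g) = wE s n f + wE s n f' := by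
  induction n with
  | zero => intro f f'; rfl
  | succ n ih => intro f f'; simp only [wE, ih, Finset.sum_add_distrib, mul_add]

lemma wE_mul (s : ι → Γ) (c : ℝ) (n : ℕ) : ∀ f : Γ → ℝ,
    wE s n (fun g => c * f g) = c * wE s n f := by
  induction n with
  | zero => intro f; rfl
  | succ n ih => intro f; simp only [wE, ih, ← Finset.mul_sum]; ring

lemma wE_const [Nonempty ι] (s : ι → Γ) (c : ℝ) (n : ℕ) : wE s n (fun _ => c) = c := by
  induction n with
  | zero => rfl
  | succ n ih => simp [wE, ih]

lemma wE_sum (s : ι → Γ) (n : ℕ) {κ : Type*} (T : Finset κ) (F : κ → Γ → ℝ) :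
    wE s n (fun g => ∑ k ∈ T, F k g) = ∑ k ∈ T, wE s n (F k) := by
  classical
  induction T using Finset.induction_on with
  | empty => have := wE_mul s 0 n (fun _ => 0); simpa using this
  | insert a T ha ih => simp only [Finset.sum_insert ha, wE_add, ih]

lemma wE_add_time (s : ι → Γ) (m n : ℕ) : ∀ f : Γ → ℝ,
    wE s (n + m) f = wE s n (fun x => wE s m (fun y => f (x * y))) := by
  induction n with
  | zero => intro f; simp [wE]
  | succ n ih =>
    intro f
    rw [show n + 1 + m = (n + m) + 1 by omega]
    simp only [wE, ih, mul_assoc]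

lemma wE_eq_sum (s : ι → Γ) (n : ℕ) (f : Γ → ℝ) :
    wE s n f = ∑ g ∈ wS s n, wP s n g * f g := by
  classical
  have : wE s n f = wE s n (fun x => ∑ g ∈ wS s n, f g * (if x = g then 1 else 0)) := by
    apply wE_congr
    intro g hg
    simp [hg]
  rw [this, wE_sum]
  refine Finset.sum_congr rfl fun g _ => ?_
  rw [wE_mul, mul_comm]
  simp only [wP]

lemma wP_nonneg (s : ι → Γ) (n : ℕ) (g : Γ) : 0 ≤ wP s n g := by
  classical
  have h0 : wE s n (fun _ => (0:ℝ)) = 0 := by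
    have := wE_mul s 0 n (fun _ => 0); simpa using this
  rw [← h0]
  apply wE_mono
  intro x _
  split_ifs <;> norm_num

lemma wP_succ (s : ι → Γ) (n : ℕ) (g : Γ) :
    wP s (n+1) g = (Fintype.card ι : ℝ)⁻¹ * ∑ i, wP s n ((s i)⁻¹ * g) := by
  classical
  simp only [wP, wE, eq_inv_mul_iff_mul_eq]

lemma wP_zero_of_notMem (s : ι → Γ) (n : ℕ) (g : Γ) (hg : g ∉ wS s n) : wP s n g = 0 := by
  classical
  rw [wP, wE_eq_sum]
  apply Finset.sum_eq_zero
  intro x hx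
  have : x ≠ g := by rintro rfl; exact hg hx
  simp [this]

lemma wP_pos [Nonempty ι] (s : ι → Γ) (n : ℕ) : ∀ g ∈ wS s n, 0 < wP s n g := by
  classical
  induction n with
  | zero => intro g hg; simp [wS] at hg; simp [wP, wE, hg]
  | succ n ih =>
    intro g hg
    rw [wP_succ]
    simp only [wS, Finset.mem_biUnion, Finset.mem_image, Finset.mem_univ, true_and] at hg
    obtain ⟨i, x, hx, rfl⟩ := hg
    have hc : (0:ℝ) < Fintype.card ι := by exact_mod_cast Fintype.card_pos
    refine mul_pos (inv_pos.2 hc) ?_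
    apply Finset.sum_pos' (fun j _ => wP_nonneg s n _) ⟨i, Finset.mem_univ _, ?_⟩
    simpa using ih x hx

lemma wP_le_one [Nonempty ι] (s : ι → Γ) (n : ℕ) (g : Γ) : wP s n g ≤ 1 := by
  classical
  rw [← wE_const s 1 n]
  apply wE_mono
  intro x _
  split_ifs <;> norm_num

lemma wH_nonneg [Nonempty ι] (s : ι → Γ) (n : ℕ) : 0 ≤ wH s n := by
  rw [← wE_const s 0 n]
  apply wE_mono
  intro g hg
  have := Real.log_nonpos (wP_nonneg s n g) (wP_le_one s n g)
  linarith

lemma wP_mul_le (s : ι → Γ) (n m : ℕ) (x y : Γ) :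
    wP s n x * wP s m y ≤ wP s (n + m) (x * y) := by
  classical
  have h1 : wP s n x * wP s m y =
      wE s n (fun x' => wP s m y * (if x' = x then 1 else 0)) := by
    rw [wE_mul, mul_comm]; simp only [wP]
  rw [h1]
  conv_rhs => rw [wP, wE_add_time]
  apply wE_mono
  intro x' _
  rw [mul_comm]
  by_cases hx : x' = x
  · subst hx; simp [wP]
  · simp only [hx, if_false, zero_mul]
    have h0 : wE s m (fun _ => (0:ℝ)) = 0 := by
      have := wE_mul s 0 m (fun _ => 0); simpa using this
    refine h0.symm.le.trans (wE_mono s m _ _ ?_)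
    intro z _
    split_ifs <;> norm_num

lemma wH_subadd [Nonempty ι] (s : ι → Γ) : Subadditive (wH s) := by
  intro n m
  have h1 : wH s (n + m) = wE s n (fun x => wE s m (fun y => -Real.log (wP s (n+m) (x * y)))) := by
    rw [wH, wE_add_time]
  have h2 : wH s n + wH s m =
      wE s n (fun x => wE s m (fun y => -Real.log (wP s n x) + -Real.log (wP s m y))) := by
    simp only [wE_add, wE_const]; rfl
  rw [h1, h2]
  apply wE_mono
  intro x hx
  apply wE_mono
  intro y hy
  have hp := wP_pos s n x hx
  have hq := wP_pos s m y hy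
  have := Real.log_le_log (mul_pos hp hq) (wP_mul_le s n m x y)
  rw [Real.log_mul hp.ne' hq.ne'] at this
  linarith

lemma wH_tendsto [Nonempty ι] (s : ι → Γ) :
    ∃ h, Tendsto (fun n : ℕ => wH s n / n) atTop (𝓝 h) := by
  refine ⟨_, (wH_subadd s).tendsto_lim ⟨0, ?_⟩⟩
  rintro _ ⟨n, rfl⟩
  exact div_nonneg (wH_nonneg s n) (by positivity)

/-- Gibbs inequality. -/
lemma wH_le_of_sum [Nonempty ι] (s : ι → Γ) (n : ℕ) (r : Γ → ℝ) (hr : ∀ g, 0 < r g)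
    (hs : ∑ g ∈ wS s n, r g ≤ 1) : wH s n ≤ wE s n (fun g => -Real.log (r g)) := by
  have h1 : wH s n ≤ wE s n (fun g => -Real.log (r g) + (r g / wP s n g + -1)) := by
    apply wE_mono
    intro g hg
    have hp := wP_pos s n g hg
    have := Real.log_le_sub_one_of_pos (div_pos (hr g) hp)
    rw [Real.log_div (hr g).ne' hp.ne'] at this
    linarith
  have h2 : wE s n (fun g => r g / wP s n g) = ∑ g ∈ wS s n, r g := by
    rw [wE_eq_sum]
    refine Finset.sum_congr rfl fun g hg => ?_
    have hp := wP_pos s n g hg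
    field_simp
  rw [wE_add, wE_add, wE_const, h2] at h1
  linarith

lemma wP_le_of_super (s : ι → Γ) (f : Γ → ℝ) (f0 : ∀ g, 0 ≤ f g) (f1 : 1 ≤ f 1)
    (hf : ∀ g, (Fintype.card ι : ℝ)⁻¹ * ∑ i, f ((s i)⁻¹ * g) ≤ f g) (n : ℕ) :
    ∀ g, wP s n g ≤ f g := by
  classical
  induction n with
  | zero =>
    intro g
    simp only [wP, wE]
    split_ifs with h
    · subst h; exact f1
    · exact f0 g
  | succ n ih =>
    intro g
    rw [wP_succ]
    refine le_trans ?_ (hf g)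
    gcongr with i
    exact ih _

lemma wE_drift_ge [Nonempty ι] (s : ι → Γ) (f : Γ → ℝ) (c : ℝ) (f1 : f 1 = 0)
    (hf : ∀ g, f g + c ≤ (Fintype.card ι : ℝ)⁻¹ * ∑ i, f (s i * g)) (n : ℕ) :
    n * c ≤ wE s n f := by
  induction n with
  | zero => simp [wE, f1]
  | succ n ih =>
    have h : wE s (n+1) f = wE s n (fun g => (Fintype.card ι : ℝ)⁻¹ * ∑ i, f (s i * g)) := by
      rw [wE_mul, wE_sum]; rfl
    have h2 : wE s n (fun g => f g + c) ≤ wE s (n+1) f := by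
      rw [h]; exact wE_mono s n _ _ fun g _ => hf g
    rw [wE_add, wE_const] at h2
    push_cast; linarith

lemma wE_drift_le [Nonempty ι] (s : ι → Γ) (f : Γ → ℝ) (c : ℝ) (f1 : f 1 = 0)
    (hf : ∀ g, (Fintype.card ι : ℝ)⁻¹ * ∑ i, f (s i * g) ≤ f g + c) (n : ℕ) :
    wE s n f ≤ n * c := by
  induction n with
  | zero => simp [wE, f1]
  | succ n ih =>
    have h : wE s (n+1) f = wE s n (fun g => (Fintype.card ι : ℝ)⁻¹ * ∑ i, f (s i * g)) := by
      rw [wE_mul, wE_sum]; rfl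
    have h2 : wE s (n+1) f ≤ wE s n (fun g => f g + c) := by
      rw [h]; exact wE_mono s n _ _ fun g _ => hf g
    rw [wE_add, wE_const] at h2
    push_cast; linarith

/-- Entropy bounds for a walk with a tree-like length function. -/
lemma wH_bounds (s : ι → Γ) (k : ℕ) (hk : 1 ≤ k) (hc : Fintype.card ι = 2 * k + 2)
    (l : Γ → ℕ) (l1 : l 1 = 0) (lle : ∀ i g, l (s i * g) ≤ l g + 1)
    (hsym : ∀ F : Γ → ℝ, ∑ i, F (s i)⁻¹ = ∑ i, F (s i))
    (hsum : ∀ (F : ℕ → ℝ) g, ∑ i, F (l (s i * g)) = 2 * F (l g) +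
      if l g = 0 then 2 * k * F 1 else (2 * k - 1) * F (l g + 1) + F (l g - 1))
    (hcard : ∀ (S : Finset Γ) (m : ℕ), (S.filter (fun g => l g = m)).card ≤ (2 * k) ^ m) (n : ℕ) :
    n * (((k:ℝ) - 1) / (k + 1)) * Real.log (2 * k - 1) ≤ wH s n ∧
    wH s n ≤ Real.log (n + 1) + n * ((k:ℝ) / (k + 1)) * Real.log (2 * k) := by
  have : Nonempty ι := Fintype.card_pos_iff.1 (by omega)
  have hk' : (1:ℝ) ≤ k := by exact_mod_cast hk
  have hcr : (Fintype.card ι : ℝ) = 2 * (k + 1) := by rw [hc]; push_cast; ring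
  have hq : (0:ℝ) < 2 * k - 1 := by linarith
  constructor
  · have hP : ∀ g, wP s n g ≤ (2 * (k:ℝ) - 1)⁻¹ ^ (l g) := by
      refine wP_le_of_super s (fun g => (2 * (k:ℝ) - 1)⁻¹ ^ (l g)) (fun g => by positivity)
        (by simp [l1]) ?_ n
      intro g
      rw [hsym (fun x => (2 * (k:ℝ) - 1)⁻¹ ^ (l (x * g))), hsum (fun m => (2 * (k:ℝ) - 1)⁻¹ ^ m),
        hcr, inv_mul_le_iff₀ (by positivity)]
      split_ifs with h
      · rw [h]
        have : (2 * (k:ℝ) - 1)⁻¹ ≤ 1 := inv_le_one_of_one_le₀ (by linarith)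
        simp only [pow_zero, pow_one]
        nlinarith
      · obtain ⟨m, hm⟩ := Nat.exists_eq_succ_of_ne_zero h
        rw [hm]
        apply le_of_eq
        simp only [Nat.succ_eq_add_one, Nat.add_sub_cancel, pow_succ]
        field_simp
        ring
    have hD : n * (((k:ℝ) - 1) / (k + 1)) ≤ wE s n (fun g => (l g : ℝ)) := by
      refine wE_drift_ge s _ _ (by simp [l1]) ?_ n
      intro g
      rw [hsum (fun m => (m:ℝ)), hcr, le_inv_mul_iff₀ (by positivity)]
      have e : 2 * ((k:ℝ) + 1) * (l g + (k - 1) / (k + 1)) = 2 * (k + 1) * l g + 2 * (k - 1) := by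
        field_simp
      rw [e]
      split_ifs with h
      · rw [h]; push_cast; linarith
      · obtain ⟨m, hm⟩ := Nat.exists_eq_succ_of_ne_zero h
        rw [hm]
        apply le_of_eq
        simp only [Nat.succ_eq_add_one, Nat.add_sub_cancel]
        push_cast; ring
    have hlog : 0 ≤ Real.log (2 * (k:ℝ) - 1) := Real.log_nonneg (by linarith)
    calc _ ≤ wE s n (fun g => (l g : ℝ)) * Real.log (2 * k - 1) := by gcongr
      _ = wE s n (fun g => Real.log (2 * k - 1) * (l g : ℝ)) := by rw [wE_mul, mul_comm]
      _ ≤ wH s n := by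
        apply wE_mono
        intro g hg
        have := Real.log_le_log (wP_pos s n g hg) (hP g)
        rw [Real.log_pow, Real.log_inv] at this
        linarith
  · have hD : wE s n (fun g => (l g : ℝ)) ≤ n * ((k:ℝ) / (k + 1)) := by
      refine wE_drift_le s _ _ (by simp [l1]) ?_ n
      intro g
      rw [hsum (fun m => (m:ℝ)), hcr, inv_mul_le_iff₀ (by positivity)]
      have e : 2 * ((k:ℝ) + 1) * (l g + k / (k + 1)) = 2 * (k + 1) * l g + 2 * k := by
        field_simp
      rw [e]
      split_ifs with h
      · rw [h]; push_cast; linarith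
      · obtain ⟨m, hm⟩ := Nat.exists_eq_succ_of_ne_zero h
        rw [hm]
        simp only [Nat.succ_eq_add_one, Nat.add_sub_cancel]
        push_cast; nlinarith
    have hl : ∀ n, ∀ g ∈ wS s n, l g ≤ n := by
      classical
      intro n
      induction n with
      | zero => intro g hg; simp [wS] at hg; simp [hg, l1]
      | succ n ih =>
        intro g hg
        simp only [wS, Finset.mem_biUnion, Finset.mem_image, Finset.mem_univ, true_and] at hg
        obtain ⟨i, x, hx, rfl⟩ := hg
        have := ih x hx
        have := lle i x
        omega
    have hr : ∑ g ∈ wS s n, ((n:ℝ) + 1)⁻¹ * (2 * (k:ℝ))⁻¹ ^ (l g) ≤ 1 := by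
      rw [← Finset.mul_sum, inv_mul_le_iff₀ (by positivity), mul_one]
      rw [← Finset.sum_fiberwise_of_maps_to (s := wS s n) (t := Finset.range (n+1)) (g := l)
        (fun g hg => Finset.mem_range.2 (Nat.lt_succ_of_le (hl n g hg)))]
      calc _ ≤ ∑ m ∈ Finset.range (n+1), (1:ℝ) := by
            apply Finset.sum_le_sum
            intro m _
            have : ∑ g ∈ wS s n with l g = m, (2 * (k:ℝ))⁻¹ ^ (l g) =
                ((wS s n).filter (fun g => l g = m)).card * (2 * (k:ℝ))⁻¹ ^ m := by
              rw [← nsmul_eq_mul]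
              apply Finset.sum_eq_card_nsmul
              intro g hg
              rw [(Finset.mem_filter.1 hg).2]
            rw [this, inv_pow, ← div_eq_mul_inv, div_le_one (by positivity)]
            exact_mod_cast hcard (wS s n) m
        _ = _ := by simp
    have hG := wH_le_of_sum s n (fun g => ((n:ℝ) + 1)⁻¹ * (2 * (k:ℝ))⁻¹ ^ (l g))
      (fun g => by positivity) hr
    have e : ∀ g, -Real.log (((n:ℝ) + 1)⁻¹ * (2 * (k:ℝ))⁻¹ ^ (l g)) =
        Real.log (n + 1) + Real.log (2 * k) * (l g : ℝ) := by
      intro g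
      rw [Real.log_mul (by positivity) (by positivity), Real.log_pow, Real.log_inv, Real.log_inv]
      ring
    simp only [e] at hG
    rw [wE_add, wE_const, wE_mul] at hG
    have hlog : 0 ≤ Real.log (2 * (k:ℝ)) := Real.log_nonneg (by linarith)
    nlinarith [mul_le_mul_of_nonneg_left hD hlog]

end Walk

section Link
variable {Γ : Type*} [Group Γ]

/-- The symmetric steps attached to a family `t`. -/
def symStep {d : ℕ} (t : Fin d → Γ) (p : Fin d × Bool) : Γ := if p.2 then t p.1 else (t p.1)⁻¹

lemma symStep_symm {d : ℕ} (t : Fin d → Γ) (F : Γ → ℝ) :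
    ∑ p, F (symStep t p)⁻¹ = ∑ p, F (symStep t p) := by
  simp only [Fintype.sum_prod_type, symStep]
  refine Finset.sum_congr rfl fun i _ => ?_
  simp [add_comm]

lemma convPow_apply [Countable Γ] [MeasurableSpace Γ] [DiscreteMeasurableSpace Γ]
    {ι : Type*} [Fintype ι] (s : ι → Γ) (ν : Measure Γ)
    (hι : 0 < Fintype.card ι)
    (hν : ν = (Fintype.card ι : ENNReal)⁻¹ • ∑ i, Measure.dirac (s i)) (n : ℕ) :
    SFinite (convPow ν n) ∧ ∀ g, convPow ν n {g} = ENNReal.ofReal (wP s n g) := by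
  classical
  have hνs : SFinite ν := by rw [hν, ← Measure.sum_fintype]; infer_instance
  induction n with
  | zero =>
    refine ⟨by simp only [convPow]; infer_instance, fun g => ?_⟩
    simp only [convPow, wP, wE]
    rw [Measure.dirac_apply]
    by_cases h : (1:Γ) = g <;> simp [h]
  | succ n ih =>
    obtain ⟨h1, ih⟩ := ih
    refine ⟨by simp only [convPow]; infer_instance, fun g => ?_⟩
    simp only [convPow]
    rw [Measure.map_apply (measurable_of_countable _) (measurableSet_singleton _),
      Measure.prod_apply (Set.Countable.measurableSet (Set.to_countable _)), hν]
    have : ∀ x : Γ, Prod.mk x ⁻¹' ((fun p : Γ × Γ => p.1 * p.2) ⁻¹' {g}) = {x⁻¹ * g} := by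
      intro x; ext y; simp [eq_inv_mul_iff_mul_eq]
    simp only [this, ← hν]
    rw [hν, lintegral_smul_measure, lintegral_finsetSum_measure]
    simp only [lintegral_dirac]
    rw [← hν]
    simp only [ih]
    rw [wP_succ, ENNReal.ofReal_mul (by positivity), ENNReal.ofReal_sum_of_nonneg
      (fun i _ => wP_nonneg s n _), ENNReal.ofReal_inv_of_pos (by exact_mod_cast hι)]
    simp

lemma entropy_eq [Countable Γ] [MeasurableSpace Γ] [DiscreteMeasurableSpace Γ]
    {ι : Type*} [Fintype ι] (s : ι → Γ) (ν : Measure Γ)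
    (hι : 0 < Fintype.card ι)
    (hν : ν = (Fintype.card ι : ENNReal)⁻¹ • ∑ i, Measure.dirac (s i)) (n : ℕ) :
    shannonEntropy (convPow ν n) = wH s n := by
  have h := (convPow_apply s ν hι hν n).2
  simp only [shannonEntropy, h, ENNReal.toReal_ofReal (wP_nonneg s n _)]
  rw [tsum_eq_sum (s := wS s n), wH, wE_eq_sum]
  · exact Finset.sum_congr rfl fun g _ => by ring
  · intro g hg
    simp [wP_zero_of_notMem s n g hg]

lemma quotientWalkEntropy_eq (d : ℕ) (hd : 2 ≤ d)
    [MeasurableSpace (FreeGroup (Fin d))] [MeasurableSingletonClass (FreeGroup (Fin d))]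
    (μ : Measure (FreeGroup (Fin d)))
    (hμ : μ = (2 * (d : ENNReal))⁻¹ •
      ∑ i : Fin d, (Measure.dirac (FreeGroup.of i) + Measure.dirac (FreeGroup.of i)⁻¹))
    (N : Subgroup (FreeGroup (Fin d))) (hN : N.Normal) (n : ℕ) :
    quotientWalkEntropy μ N hN n =
      wH (symStep (fun i => (QuotientGroup.mk (FreeGroup.of i) : FreeGroup (Fin d) ⧸ N))) n := by
  let _ : MeasurableSpace (FreeGroup (Fin d) ⧸ N) := ⊤
  have : Countable (FreeGroup (Fin d) ⧸ N) :=
    (QuotientGroup.mk_surjective (s := N)).countable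
  have : DiscreteMeasurableSpace (FreeGroup (Fin d) ⧸ N) := ⟨fun _ => trivial⟩
  have hm : Measurable (QuotientGroup.mk : FreeGroup (Fin d) → FreeGroup (Fin d) ⧸ N) :=
    measurable_of_countable _
  refine entropy_eq _ _ (by simp; omega) ?_ n
  rw [hμ, Measure.map_smul, ← Measure.mapₗ_apply_of_measurable hm, map_sum]
  simp only [Measure.mapₗ_apply_of_measurable hm, Measure.map_add _ _ hm, Measure.map_dirac' hm,
    Fintype.sum_prod_type, symStep]
  simp [mul_comm]

end Link

section Tree

lemma norm_letter_mul {k : ℕ} (p : Fin k × Bool) (x : FreeGroup (Fin k)) :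
    FreeGroup.norm (FreeGroup.mk [p] * x) =
      match x.toWord with
      | [] => 1
      | hd :: tl => if p = (hd.1, !hd.2) then tl.length else tl.length + 2 := by
  have h : (FreeGroup.mk [p] * x).toWord = FreeGroup.reduce (p :: x.toWord) := by
    conv_lhs => rw [← FreeGroup.mk_toWord (x := x)]
    rw [FreeGroup.mul_mk, FreeGroup.toWord_mk]; rfl
  rw [FreeGroup.norm, h, FreeGroup.reduce.cons, FreeGroup.reduce_toWord]
  cases x.toWord with
  | nil => rfl
  | cons hd tl =>
    simp only [Prod.ext_iff]
    split_ifs <;> simp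

lemma sum_norm {k : ℕ} (F : ℕ → ℝ) (x : FreeGroup (Fin k)) :
    ∑ p : Fin k × Bool, F (FreeGroup.norm (FreeGroup.mk [p] * x)) =
      if x.norm = 0 then 2 * k * F 1 else (2 * k - 1) * F (x.norm + 1) + F (x.norm - 1) := by
  simp only [norm_letter_mul]
  rw [FreeGroup.norm]
  cases x.toWord with
  | nil => simp [mul_comm]
  | cons hd tl =>
    simp only [List.length_cons, Nat.add_sub_cancel, Nat.succ_ne_zero, if_false]
    have : ∀ p : Fin k × Bool, F (if p = (hd.1, !hd.2) then tl.length else tl.length + 2) =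
        F (tl.length + 2) + if p = (hd.1, !hd.2) then F tl.length - F (tl.length + 2) else 0 := by
      intro p; split_ifs <;> ring
    simp only [this, Finset.sum_add_distrib, Finset.sum_ite_eq', Finset.mem_univ, if_true]
    simp; ring

/-- Kill the first generator. -/
def killHom (k : ℕ) : FreeGroup (Fin (k+1)) →* FreeGroup (Fin k) :=
  FreeGroup.lift (Fin.cases 1 FreeGroup.of)

lemma killHom_zero (k : ℕ) : killHom k (FreeGroup.of 0) = 1 := by simp [killHom]

lemma killHom_succ (k : ℕ) (i : Fin k) : killHom k (FreeGroup.of i.succ) = FreeGroup.of i := by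
  simp [killHom]

lemma kill_bounds (k : ℕ) (hk : 1 ≤ k) (n : ℕ) :
    n * (((k:ℝ) - 1) / (k + 1)) * Real.log (2 * k - 1) ≤
      wH (symStep (fun i => (QuotientGroup.mk (FreeGroup.of i) :
        FreeGroup (Fin (k+1)) ⧸ (killHom k).ker))) n ∧
    wH (symStep (fun i => (QuotientGroup.mk (FreeGroup.of i) :
        FreeGroup (Fin (k+1)) ⧸ (killHom k).ker))) n
       ≤ Real.log (n + 1) + n * ((k:ℝ) / (k + 1)) * Real.log (2 * k) := by
  set φ := QuotientGroup.kerLift (killHom k) with hφ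
  have hinj : Function.Injective φ := QuotientGroup.kerLift_injective _
  have hmk : ∀ g, φ (QuotientGroup.mk g) = killHom k g := fun g => rfl
  have hs : ∀ (i : Fin k) (b : Bool), φ (symStep (fun i => (QuotientGroup.mk (FreeGroup.of i) :
        FreeGroup (Fin (k+1)) ⧸ (killHom k).ker)) (i.succ, b)) = FreeGroup.mk [(i, b)] := by
    intro i b
    cases b
    · simp only [symStep, Bool.false_eq_true, if_false, map_inv, hmk, killHom_succ]; rfl
    · simp only [symStep, if_true, hmk, killHom_succ]; rfl
  have h0 : ∀ (b : Bool), φ (symStep (fun i => (QuotientGroup.mk (FreeGroup.of i) :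
        FreeGroup (Fin (k+1)) ⧸ (killHom k).ker)) (0, b)) = 1 := by
    intro b
    cases b
    · simp only [symStep, Bool.false_eq_true, if_false, map_inv, hmk, killHom_zero, inv_one]
    · simp only [symStep, if_true, hmk, killHom_zero]
  refine wH_bounds _ k hk (by simp; ring) (fun g => (φ g).norm) (by simp) ?_
    (symStep_symm _) ?_ ?_ n
  · rintro ⟨i, b⟩ g
    simp only [map_mul]
    refine Fin.cases ?_ (fun i => ?_) i
    · rw [h0]; simp
    · rw [hs]
      refine (FreeGroup.norm_mul_le _ _).trans ?_
      have : (FreeGroup.mk [(i, b)]).norm ≤ 1 := FreeGroup.norm_mk_le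
      omega
  · intro F g
    simp only [map_mul]
    rw [Fintype.sum_prod_type, Fin.sum_univ_succ]
    simp only [hs, h0]
    rw [← Fintype.sum_prod_type (fun p : Fin k × Bool => F (FreeGroup.norm (FreeGroup.mk [(p.1, p.2)] * φ g)))]
    simp only [Prod.mk.eta]
    rw [sum_norm]
    simp; 
  · intro S m
    have hc : Fintype.card (List.Vector (Fin k × Bool) m) = (2 * k) ^ m := by
      rw [card_vector]; simp [mul_comm]
    rw [← hc, ← Finset.card_univ]
    classical
    refine le_trans ?_ (Finset.card_image_le (s := Finset.univ)
      (f := fun v : List.Vector (Fin k × Bool) m => v.toList))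
    refine Finset.card_le_card_of_injOn (fun g => (φ g).toWord) ?_ ?_
    · intro g hg
      have hg' : (φ g).toWord.length = m := (Finset.mem_filter.1 (Finset.mem_coe.1 hg)).2
      exact Finset.mem_coe.2 (Finset.mem_image.2 ⟨⟨(φ g).toWord, hg'⟩, Finset.mem_univ _, rfl⟩)
    · intro x _ y _ hxy
      exact hinj (FreeGroup.toWord_injective hxy)

end Tree

section Seq

/-- Auxiliary finite cyclic quotients. -/
def cycHom (k i : ℕ) : FreeGroup (Fin (k+1)) →* Multiplicative (ZMod i) :=
  FreeGroup.lift (fun _ => Multiplicative.ofAdd 1)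

/-- The sequence of normal subgroups. -/
def seqN (k : ℕ) : ℕ → Subgroup (FreeGroup (Fin (k+1)))
  | 0 => (killHom k).ker
  | i + 1 => (cycHom k (i+1)).ker

lemma seqN_normal (k i : ℕ) : (seqN k i).Normal := by
  cases i <;> (simp only [seqN]; infer_instance)

lemma mem_seqN (k i j : ℕ) (hk : 1 ≤ k) :
    FreeGroup.of (Fin.last k) ^ j ∈ seqN k i ↔ i ∣ j := by
  cases i with
  | zero =>
    obtain ⟨m, rfl⟩ : ∃ m, k = m + 1 := ⟨k - 1, by omega⟩
    rw [seqN, MonoidHom.mem_ker, map_pow, ← Fin.succ_last, killHom_succ, ← FreeGroup.norm_eq_zero,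
      FreeGroup.norm_of_pow, zero_dvd_iff]
  | succ i =>
    rw [seqN, MonoidHom.mem_ker, map_pow, cycHom, FreeGroup.lift_apply_of, ← ofAdd_nsmul,
      ofAdd_eq_one, nsmul_one, ZMod.natCast_eq_zero_iff]

lemma seqN_inj (k : ℕ) (hk : 1 ≤ k) : Function.Injective (seqN k) := by
  intro i j h
  apply Nat.dvd_antisymm
  · rw [← mem_seqN k i j hk, h, mem_seqN k j j hk]
  · rw [← mem_seqN k j i hk, ← h, mem_seqN k i i hk]

lemma seqN_ne_bot (k : ℕ) (hk : 1 ≤ k) (i : ℕ) : seqN k i ≠ ⊥ := by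
  cases i with
  | zero =>
    intro h
    have : FreeGroup.of (0 : Fin (k+1)) ∈ seqN k 0 := by
      rw [seqN, MonoidHom.mem_ker, killHom_zero]
    rw [h, Subgroup.mem_bot] at this
    exact FreeGroup.of_ne_one _ this
  | succ i =>
    intro h
    have : FreeGroup.of (0 : Fin (k+1)) * (FreeGroup.of (Fin.last k))⁻¹ ∈ seqN k (i+1) := by
      rw [seqN, MonoidHom.mem_ker]; simp [cycHom]
    rw [h, Subgroup.mem_bot, mul_inv_eq_one] at this
    have := FreeGroup.of_injective this
    have := congrArg Fin.val this
    simp at this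
    omega

end Seq

/-- Let `d ≥ 2` and let `μ` be the uniform probability measure on a symmetric free
generating set of the free group `F_d`.  Then there is a sequence `(N_i)` of pairwise
distinct nontrivial normal subgroups of `F_d` such that, writing `μ_i` for the
pushforward of `μ` to `F_d/N_i`, for every `ε > 0` there is `i` with
`h_RW(μ) > h_RW(μ_i) > ((d−2)/(2d−2))·h_RW(μ) − ε`, where
`h_RW(μ) = ((d−1)/d)·log(2d−1)` is the Avez entropy. -/
theorem middle_entropy_quotient_boundaries (d : ℕ) (hd : 2 ≤ d)
    [MeasurableSpace (FreeGroup (Fin d))] [MeasurableSingletonClass (FreeGroup (Fin d))]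
    (μ : Measure (FreeGroup (Fin d)))
    (hμ : μ = (2 * (d : ENNReal))⁻¹ •
      ∑ i : Fin d, (Measure.dirac (FreeGroup.of i) + Measure.dirac (FreeGroup.of i)⁻¹)) :
    ∃ (N : ℕ → Subgroup (FreeGroup (Fin d))) (hN : ∀ i, (N i).Normal),
      Function.Injective N ∧ (∀ i, N i ≠ ⊥) ∧
      ∀ ε : ℝ, 0 < ε → ∃ (i : ℕ) (h : ℝ),
        Tendsto (fun n : ℕ => quotientWalkEntropy μ (N i) (hN i) n / n) atTop (𝓝 h) ∧
        ((d : ℝ) - 1) / d * Real.log (2 * d - 1) > h ∧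
        h > ((d : ℝ) - 2) / (2 * d - 2) *
              (((d : ℝ) - 1) / d * Real.log (2 * d - 1)) - ε := by
  obtain ⟨k, rfl⟩ : ∃ k, d = k + 1 := ⟨d - 1, by omega⟩
  have hk : 1 ≤ k := by omega
  have hk' : (1:ℝ) ≤ k := by exact_mod_cast hk
  refine ⟨seqN k, seqN_normal k, seqN_inj k hk, seqN_ne_bot k hk, fun ε hε => ⟨0, ?_⟩⟩
  simp only [quotientWalkEntropy_eq (k+1) hd μ hμ]
  have hb := kill_bounds k hk
  have hnn : (seqN k 0).Normal := seqN_normal k 0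
  obtain ⟨h, hh⟩ := wH_tendsto (symStep (fun i => (QuotientGroup.mk (FreeGroup.of i) :
        FreeGroup (Fin (k+1)) ⧸ (killHom k).ker)))
  have hlow : ((k:ℝ) - 1) / (k + 1) * Real.log (2 * k - 1) ≤ h := by
    refine ge_of_tendsto hh ?_
    filter_upwards [eventually_gt_atTop 0] with n hn
    have hn' : (0:ℝ) < n := by exact_mod_cast hn
    rw [le_div_iff₀ hn']
    linarith [(hb n).1]
  have hup : h ≤ (k:ℝ) / (k + 1) * Real.log (2 * k) := by
    have hl : Tendsto (fun n : ℕ => Real.log ((n:ℝ) + 1) / n) atTop (𝓝 0) := by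
      have h1 : Tendsto (fun n : ℕ => Real.log (((n + 1 : ℕ):ℝ)) / ((n + 1 : ℕ):ℝ)) atTop (𝓝 0) :=
        ((Real.isLittleO_log_id_atTop.tendsto_div_nhds_zero).comp
          tendsto_natCast_atTop_atTop).comp (tendsto_add_atTop_nat 1)
      refine squeeze_zero' (g := fun n : ℕ => 2 * (Real.log (((n + 1 : ℕ):ℝ)) / ((n + 1 : ℕ):ℝ)))
        ?_ ?_ (by simpa using h1.const_mul 2)
      · exact Eventually.of_forall fun n => div_nonneg
          (Real.log_nonneg (by linarith [n.cast_nonneg (α := ℝ)])) (by positivity)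
      · filter_upwards [eventually_gt_atTop 0] with n hn
        have hn' : (1:ℝ) ≤ n := by exact_mod_cast hn
        push_cast
        have hL : 0 ≤ Real.log ((n:ℝ) + 1) := Real.log_nonneg (by linarith)
        rw [← mul_div_assoc, div_le_div_iff₀ (by positivity) (by positivity)]
        nlinarith
    have hl2 : Tendsto (fun n : ℕ => Real.log ((n:ℝ) + 1) / n + (k:ℝ) / (k + 1) * Real.log (2 * k))
        atTop (𝓝 ((k:ℝ) / (k + 1) * Real.log (2 * k))) := by
      simpa using hl.add_const ((k:ℝ) / (k + 1) * Real.log (2 * k))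
    refine le_of_tendsto_of_tendsto hh hl2 ?_
    filter_upwards [eventually_gt_atTop 0] with n hn
    have hn' : (0:ℝ) < n := by exact_mod_cast hn
    rw [div_le_iff₀ hn', add_mul, div_mul_cancel₀ _ hn'.ne']
    linarith [(hb n).2]
  refine ⟨h, hh, ?_, ?_⟩
  · push_cast
    refine lt_of_le_of_lt hup ?_
    rw [show (k:ℝ) + 1 - 1 = k by ring, show 2 * ((k:ℝ) + 1) - 1 = 2 * k + 1 by ring]
    have : Real.log (2 * (k:ℝ)) < Real.log (2 * k + 1) :=
      Real.log_lt_log (by linarith) (by linarith)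
    gcongr
  · push_cast
    rw [show (k:ℝ) + 1 - 1 = k by ring, show 2 * ((k:ℝ) + 1) - 1 = 2 * k + 1 by ring,
      show (k:ℝ) + 1 - 2 = k - 1 by ring, show 2 * ((k:ℝ) + 1) - 2 = 2 * k by ring]
    have e : ((k:ℝ) - 1) / (2 * k) * (k / (k + 1) * Real.log (2 * k + 1)) =
        (k - 1) / (k + 1) * (Real.log (2 * k + 1) / 2) := by
      field_simp
    rw [e]
    have : ((k:ℝ) - 1) / (k + 1) * (Real.log (2 * k + 1) / 2) ≤
        (k - 1) / (k + 1) * Real.log (2 * k - 1) := by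
      rcases Nat.eq_or_lt_of_le hk with h1 | h1
      · rw [← h1]; simp
      · have h2 : (2:ℝ) ≤ k := by exact_mod_cast h1
        apply mul_le_mul_of_nonneg_left _ (div_nonneg (by linarith) (by linarith))
        have : Real.log (2 * (k:ℝ) + 1) ≤ Real.log ((2 * k - 1) ^ 2) :=
          Real.log_le_log (by linarith) (by nlinarith)
        rw [Real.log_pow] at this
        push_cast at this
        linarith
    linarith
end
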